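/- (Qudit two-sample test from independent-measurement tomography.) Let ρ and σ be density matrices on ℂ^d, let m, n ≥ 1 and k = min{m, n}, and let σ̂_m and ρ̂_n be random density matrices on ℂ^d on a common probability space such that for every δ ∈ (0,1), ℙ(‖σ̂_m − σ‖₁ ≥ δ) ≤ d·exp(−m·δ²/(86·d³)) and ℙ(‖ρ̂_n − ρ‖₁ ≥ δ) ≤ d·exp(−n·δ²/(86·d³)). Let α ∈ (0,1) with 2d ≥ α, set c = √(344·d³·ln(2d/α)/k), assume c/2 < 1, and accept H₀ iff ‖σ̂_m − ρ̂_n‖₁ ≤ c. Then: (i) if σ = ρ, the probability of rejecting H₀ is at most α; and (ii) if σ ≠ ρ, c < ‖ρ − σ‖₁, and (‖ρ − σ‖₁ − c)/2 < 1, the probability of accepting H₀ is at most 2d·exp(−k·(‖ρ − σ‖₁ − c)²/(344·d³)). -/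

import Mathlib

open Matrix MeasureTheory ProbabilityTheory
open scoped ComplexOrder

/-- The positive semidefinite square root of a matrix (junk value `0` if the matrix is not
positive semidefinite). -/
noncomputable def matSqrt {d : ℕ} (A : Matrix (Fin d) (Fin d) ℂ) : Matrix (Fin d) (Fin d) ℂ :=
  open scoped Classical in
  if h : A.PosSemidef then
    (h.1.eigenvectorUnitary : Matrix (Fin d) (Fin d) ℂ) *
      diagonal ((fun x : ℝ => (x : ℂ)) ∘ Real.sqrt ∘ h.1.eigenvalues) *
      (star h.1.eigenvectorUnitary : Matrix (Fin d) (Fin d) ℂ)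
  else 0

/-- The trace norm `‖A‖₁ = Tr[√(A†A)]`. -/
noncomputable def traceNorm {d : ℕ} (A : Matrix (Fin d) (Fin d) ℂ) : ℝ :=
  (matSqrt (Aᴴ * A)).trace.re

section TraceNorm

open scoped MatrixOrder

variable {d : ℕ}

theorem traceNorm_eq_re_trace_cfcAbs (A : Matrix (Fin d) (Fin d) ℂ) :
    traceNorm A = (CFC.abs A).trace.re := by
  have h : (Aᴴ * A).PosSemidef := posSemidef_conjTranspose_mul_self A
  have hs : CFC.sqrt (Aᴴ * A) = matSqrt (Aᴴ * A) := by
    rw [CFC.sqrt_eq_real_sqrt _ h.nonneg, cfcₙ_eq_cfc, h.1.cfc_eq, matSqrt, dif_pos h,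
      IsHermitian.cfc, Unitary.conjStarAlgAut_apply]
    rfl
  rw [traceNorm, ← hs]
  rfl

theorem traceNorm_neg (A : Matrix (Fin d) (Fin d) ℂ) : traceNorm (-A) = traceNorm A := by
  simp only [traceNorm, conjTranspose_neg, neg_mul_neg]

theorem traceNorm_sub_comm (A B : Matrix (Fin d) (Fin d) ℂ) :
    traceNorm (A - B) = traceNorm (B - A) := by
  rw [← neg_sub, traceNorm_neg]

theorem re_trace_mul_nonneg {X Y : Matrix (Fin d) (Fin d) ℂ} (hX : 0 ≤ X) (hY : 0 ≤ Y) :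
    0 ≤ (X * Y).trace.re := by
  have hs : (CFC.sqrt X)ᴴ = CFC.sqrt X := (CFC.sqrt_nonneg X).posSemidef.1
  have h := (hY.posSemidef.mul_mul_conjTranspose_same (CFC.sqrt X)).trace_nonneg
  rw [hs, trace_mul_comm, ← mul_assoc, CFC.sqrt_mul_sqrt_self X hX] at h
  exact (Complex.le_def.1 h).1

theorem re_trace_mul_le_traceNorm {S A : Matrix (Fin d) (Fin d) ℂ} (hA : A.IsHermitian)
    (h₁ : S ≤ 1) (h₂ : -1 ≤ S) : (S * A).trace.re ≤ traceNorm A := by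
  have hsub := CFC.posPart_sub_negPart A hA
  have hpos := re_trace_mul_nonneg (sub_nonneg.2 h₁) (CFC.posPart_nonneg A)
  have hneg := re_trace_mul_nonneg (neg_le_iff_add_nonneg.1 h₂) (CFC.negPart_nonneg A)
  rw [traceNorm_eq_re_trace_cfcAbs, ← CFC.posPart_add_negPart A hA]
  nth_rewrite 1 [← hsub]
  simp only [sub_mul, add_mul, one_mul, mul_sub, trace_sub, trace_add, Complex.sub_re,
    Complex.add_re] at hpos hneg ⊢
  linarith

theorem exists_re_trace_mul_eq_traceNorm {A : Matrix (Fin d) (Fin d) ℂ} (hA : A.IsHermitian) :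
    ∃ S : Matrix (Fin d) (Fin d) ℂ, S ≤ 1 ∧ -1 ≤ S ∧ (S * A).trace.re = traceNorm A := by
  have hsa : IsSelfAdjoint A := hA
  have hcont (f : ℝ → ℝ) : ContinuousOn f (spectrum ℝ A) :=
    (Matrix.finite_real_spectrum (A := A)).continuousOn f
  let f : ℝ → ℝ := fun x => if 0 ≤ x then 1 else -1
  refine ⟨cfc f A, ?_, ?_, ?_⟩
  · exact cfc_le_one f A fun x _ => by dsimp only [f]; split_ifs <;> norm_num
  · have h : algebraMap ℝ (Matrix (Fin d) (Fin d) ℂ) (-1) ≤ cfc f A :=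
      algebraMap_le_cfc f (-1) A
        (fun x _ => by dsimp only [f]; split_ifs <;> norm_num) (hcont f) hsa
    simpa using h
  · rw [traceNorm_eq_re_trace_cfcAbs, CFC.abs_eq_cfcₙ_norm A hsa, cfcₙ_eq_cfc]
    nth_rewrite 2 [← cfc_id' ℝ A hsa]
    rw [← cfc_mul f (fun x => x) A (hcont _) (hcont _)]
    congr 3
    funext x
    dsimp only [f]
    split_ifs with hx
    · rw [one_mul, Real.norm_of_nonneg hx]
    · rw [neg_one_mul, Real.norm_of_nonpos (not_le.1 hx).le]

/-- Triangle inequality for the trace norm of Hermitian matrices. -/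
theorem traceNorm_add_le {A B : Matrix (Fin d) (Fin d) ℂ} (hA : A.IsHermitian)
    (hB : B.IsHermitian) : traceNorm (A + B) ≤ traceNorm A + traceNorm B := by
  obtain ⟨S, h₁, h₂, hS⟩ := exists_re_trace_mul_eq_traceNorm (hA.add hB)
  rw [← hS, mul_add, trace_add, Complex.add_re]
  exact add_le_add (re_trace_mul_le_traceNorm hA h₁ h₂) (re_trace_mul_le_traceNorm hB h₁ h₂)

theorem traceNorm_sub_le {A B C : Matrix (Fin d) (Fin d) ℂ} (hA : A.IsHermitian)
    (hB : B.IsHermitian) (hC : C.IsHermitian) :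
    traceNorm (A - C) ≤ traceNorm (A - B) + traceNorm (B - C) := by
  simpa using traceNorm_add_le (hA.sub hB) (hB.sub hC)

end TraceNorm

/-- Union bound for two events with exponential tails whose rates are at least `k`. -/
theorem measure_le_of_subset_union_exp_tails {Ω : Type*} [MeasurableSpace Ω] {μ : Measure Ω}
    {d m n k : ℕ} (hm : k ≤ m) (hn : k ≤ n) {s t u : Set Ω} (δ : ℝ) (hu : u ⊆ s ∪ t)
    (hs : μ s ≤ ENNReal.ofReal ((d : ℝ) * Real.exp (-(m : ℝ) * (δ / 2) ^ 2 / (86 * d ^ 3))))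
    (ht : μ t ≤ ENNReal.ofReal ((d : ℝ) * Real.exp (-(n : ℝ) * (δ / 2) ^ 2 / (86 * d ^ 3)))) :
    μ u ≤ ENNReal.ofReal (2 * (d : ℝ) * Real.exp (-(k : ℝ) * δ ^ 2 / (344 * d ^ 3))) := by
  have key (l : ℕ) (hl : k ≤ l) :
      (d : ℝ) * Real.exp (-(l : ℝ) * (δ / 2) ^ 2 / (86 * d ^ 3)) ≤
        d * Real.exp (-(k : ℝ) * δ ^ 2 / (344 * d ^ 3)) := by
    have hl' : (k : ℝ) ≤ l := by exact_mod_cast hl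
    have heq : -(k : ℝ) * δ ^ 2 / (344 * d ^ 3) = -(k : ℝ) * (δ / 2) ^ 2 / (86 * d ^ 3) := by
      ring
    rw [heq]
    gcongr
  calc μ u ≤ μ s + μ t := (measure_mono hu).trans (measure_union_le s t)
    _ ≤ ENNReal.ofReal (d * Real.exp (-(k : ℝ) * δ ^ 2 / (344 * d ^ 3))) +
        ENNReal.ofReal (d * Real.exp (-(k : ℝ) * δ ^ 2 / (344 * d ^ 3))) :=
      add_le_add (hs.trans (ENNReal.ofReal_le_ofReal (key m hm)))
        (ht.trans (ENNReal.ofReal_le_ofReal (key n hn)))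
    _ = _ := by
      rw [← ENNReal.ofReal_add (by positivity) (by positivity)]
      congr 1
      ring

/-- Qudit two-sample test from independent-measurement tomography: accepting `H₀` iff
`‖σ̂_m − ρ̂_n‖₁ ≤ c` with `c = √(344·d³·ln(2d/α)/k)`, `k = min{m,n}`, gives type I error at most
`α` and type II error at most `2d·exp(−k·(‖ρ−σ‖₁−c)²/(344·d³))`. -/
theorem qudit_two_sample_indep
    {d : ℕ} (hd : 1 ≤ d)
    {Ω : Type*} [MeasurableSpace Ω] (μ : Measure Ω) [IsProbabilityMeasure μ]
    (ρ σ : Matrix (Fin d) (Fin d) ℂ)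
    (hρ : ρ.PosSemidef) (hρtr : ρ.trace = 1)
    (hσ : σ.PosSemidef) (hσtr : σ.trace = 1)
    (m n : ℕ) (hm : 1 ≤ m) (hn : 1 ≤ n) (k : ℕ) (hk : k = min m n)
    (σhat ρhat : Ω → Matrix (Fin d) (Fin d) ℂ)
    (hmeas₁ : Measurable fun ω => fun i j => σhat ω i j)
    (hmeas₂ : Measurable fun ω => fun i j => ρhat ω i j)
    (hpsd₁ : ∀ ω, (σhat ω).PosSemidef) (htr₁ : ∀ ω, (σhat ω).trace = 1)
    (hpsd₂ : ∀ ω, (ρhat ω).PosSemidef) (htr₂ : ∀ ω, (ρhat ω).trace = 1)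
    (hconc₁ : ∀ δ ∈ Set.Ioo (0 : ℝ) 1,
      μ {ω | traceNorm (σhat ω - σ) ≥ δ} ≤
        ENNReal.ofReal ((d : ℝ) * Real.exp (-(m : ℝ) * δ ^ 2 / (86 * d ^ 3))))
    (hconc₂ : ∀ δ ∈ Set.Ioo (0 : ℝ) 1,
      μ {ω | traceNorm (ρhat ω - ρ) ≥ δ} ≤
        ENNReal.ofReal ((d : ℝ) * Real.exp (-(n : ℝ) * δ ^ 2 / (86 * d ^ 3))))
    (α : ℝ) (hα : α ∈ Set.Ioo (0 : ℝ) 1) (hdα : α ≤ 2 * d)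
    (c : ℝ) (hc : c = Real.sqrt (344 * d ^ 3 * Real.log (2 * d / α) / k)) (hc1 : c / 2 < 1) :
    (σ = ρ → μ {ω | traceNorm (σhat ω - ρhat ω) > c} ≤ ENNReal.ofReal α) ∧
    (σ ≠ ρ → c < traceNorm (ρ - σ) → (traceNorm (ρ - σ) - c) / 2 < 1 →
      μ {ω | traceNorm (σhat ω - ρhat ω) ≤ c} ≤
        ENNReal.ofReal (2 * (d : ℝ) *
          Real.exp (-(k : ℝ) * (traceNorm (ρ - σ) - c) ^ 2 / (344 * d ^ 3)))) := by
  have hkm : k ≤ m := hk ▸ min_le_left m n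
  have hkn : k ≤ n := hk ▸ min_le_right m n
  have hk0 : (0 : ℝ) < k := by
    have : 1 ≤ k := hk ▸ le_min hm hn
    exact_mod_cast this
  have hd1 : (1 : ℝ) ≤ d := by exact_mod_cast hd
  have hd0 : (0 : ℝ) < d := by linarith
  obtain ⟨hα0, hα1⟩ := hα
  have hlog : 0 < Real.log (2 * d / α) :=
    Real.log_pos ((one_lt_div hα0).2 (by linarith))
  have hc0 : 0 < c := hc ▸ Real.sqrt_pos.2 (by positivity)
  have hcsq : c ^ 2 = 344 * d ^ 3 * Real.log (2 * d / α) / k := by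
    rw [hc, Real.sq_sqrt (by positivity)]
  refine ⟨fun hσρ => ?_, fun _ hlt hlt1 => ?_⟩
  · subst hσρ
    have hδ : c / 2 ∈ Set.Ioo (0 : ℝ) 1 := ⟨by linarith, hc1⟩
    refine (measure_le_of_subset_union_exp_tails hkm hkn c (fun ω hω => ?_)
      (hconc₁ _ hδ) (hconc₂ _ hδ)).trans (ENNReal.ofReal_le_ofReal (le_of_eq ?_))
    · have htri := traceNorm_sub_le (hpsd₁ ω).1 hσ.1 (hpsd₂ ω).1
      rw [traceNorm_sub_comm σ (ρhat ω)] at htri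
      simp only [Set.mem_union, Set.mem_ofPred_eq] at hω ⊢
      by_contra! h
      linarith [h.1, h.2]
    · have hexp : -(k : ℝ) * c ^ 2 / (344 * d ^ 3) = -Real.log (2 * d / α) := by
        rw [hcsq]
        field_simp
      rw [hexp, Real.exp_neg, Real.exp_log (by positivity)]
      field_simp
  · have hδ : (traceNorm (ρ - σ) - c) / 2 ∈ Set.Ioo (0 : ℝ) 1 := ⟨by linarith, hlt1⟩
    refine measure_le_of_subset_union_exp_tails hkm hkn _ (fun ω hω => ?_)
      (hconc₁ _ hδ) (hconc₂ _ hδ)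
    have htri₁ := traceNorm_sub_le hρ.1 (hpsd₂ ω).1 hσ.1
    have htri₂ := traceNorm_sub_le (hpsd₂ ω).1 (hpsd₁ ω).1 hσ.1
    rw [traceNorm_sub_comm ρ (ρhat ω)] at htri₁
    rw [traceNorm_sub_comm (ρhat ω) (σhat ω)] at htri₂
    simp only [Set.mem_union, Set.mem_ofPred_eq] at hω ⊢
    by_contra! h
    linarith [h.1, h.2]
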